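/- Fix an integer s ≥ 2. Define r : ℤ → ℚ by r(n) = 1/n! for n ≥ 0 and r(n) = 0 for n < 0. Let (i₁,…,i_{2s+1}) be given by i₁ = i₂ = 2, i_j = 1 for 3 ≤ j ≤ 2s−1, and i_{2s} = i_{2s+1} = 0. Then the determinant of the (2s+1)×(2s+1) matrix with (j,ℓ)-entry r(s − 1 + i_j − j + ℓ) equals ((s−1)(s+1)²(2s+1)²/(3(3s+1)))·∏_{k=0}^{2s} k!/(s+k)!. -/

import Mathlib

/-!
Reversing rows and columns turns the matrix into `1 / (c k - m)!`, where `c 0 < ⋯ < c (2s)`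
enumerates the interval `{s - 1, …, 3s + 1}` without `s + 1` and `3s - 1`. Pulling `1 / (c k)!` out
of row `k` leaves the falling factorials `c (c - 1) ⋯ (c - m + 1)` at `c = c k`, which vanish for
`m > c` as they should. They are monic of degree `m` in `c`, so the determinant is a Vandermonde
determinant divided by `∏ (c k)!`. As a function of a finite set of naturals this quotient is
`∏ k! / (a + k)!` on the interval starting at `a`, and removing a point `p` divides it by
`(∏ |x - p|) / p!`, where `x` runs over the remaining points. Two removals leave a quotient of
factorials, which simplifies to the stated coefficient.
-/

/-- `r(n) = 1/n!` for `n ≥ 0` and `r(n) = 0` for `n < 0`. -/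
def rfact (n : ℤ) : ℚ := if 0 ≤ n then 1 / (Nat.factorial n.toNat : ℚ) else 0

open Finset Matrix
open scoped Nat

/-- The right-hand side of Frobenius's formula `f^λ / |λ|! = ∏_{x < y} (y - x) / ∏ₓ x!` for the
number `f^λ` of standard Young tableaux, as a function of the set `A` of beta-numbers
`λ_j + #A - j`, `1 ≤ j ≤ #A`, of the partition `λ`, whose last parts may be zero. -/
def frobeniusProduct (A : Finset ℕ) : ℚ :=
  ∏ x ∈ A, (∏ y ∈ A with x < y, ((y : ℚ) - x)) / x !

lemma frobeniusProduct_insert {A : Finset ℕ} {p : ℕ} (hp : p ∉ A) :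
    frobeniusProduct (insert p A) =
      frobeniusProduct A * ((∏ x ∈ A, |(x : ℚ) - p|) / p !) := by
  have above : ∏ y ∈ insert p A with p < y, ((y : ℚ) - p) =
      ∏ x ∈ A, if p < x then (x : ℚ) - p else 1 := by
    rw [filter_insert, if_neg p.lt_irrefl, prod_filter]
  have below (x : ℕ) : ∏ y ∈ insert p A with x < y, ((y : ℚ) - x) =
      (if x < p then (p : ℚ) - x else 1) * ∏ y ∈ A with x < y, ((y : ℚ) - x) := by
    simp only [prod_filter, prod_insert hp]
  have abs_split : ∀ x ∈ A, |(x : ℚ) - p| =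
      (if p < x then (x : ℚ) - p else 1) * if x < p then (p : ℚ) - x else 1 := by
    intro x hx
    rcases lt_or_gt_of_ne (ne_of_mem_of_not_mem hx hp) with h | h
    · rw [if_neg h.not_gt, if_pos h, one_mul, abs_sub_comm, abs_of_pos (by simpa using h)]
    · rw [if_pos h, if_neg h.not_gt, mul_one, abs_of_pos (by simpa using h)]
  rw [frobeniusProduct, prod_insert hp, above, frobeniusProduct]
  simp only [below, mul_div_assoc, prod_mul_distrib, prod_congr rfl abs_split]
  ring

lemma prod_abs_sub_ne_zero {A : Finset ℕ} {p : ℕ} (hp : p ∉ A) :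
    ∏ x ∈ A, |(x : ℚ) - p| ≠ 0 :=
  prod_ne_zero_iff.2 fun _ hx =>
    abs_ne_zero.2 (sub_ne_zero.2 (Nat.cast_injective.ne (ne_of_mem_of_not_mem hx hp)))

lemma frobeniusProduct_erase {A : Finset ℕ} {p : ℕ} (hp : p ∈ A) :
    frobeniusProduct (A.erase p) =
      frobeniusProduct A * (p ! / ∏ x ∈ A.erase p, |(x : ℚ) - p|) := by
  have hne := prod_abs_sub_ne_zero (notMem_erase p A)
  rw [← insert_erase hp, frobeniusProduct_insert (notMem_erase p A), insert_erase hp]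
  field_simp

lemma prod_Ico_abs_sub (a k : ℕ) : ∏ x ∈ Ico a (a + k), |(x : ℚ) - (a + k : ℕ)| = k ! := by
  rw [prod_Ico_eq_prod_range, add_tsub_cancel_left, ← prod_range_reflect,
    ← prod_range_add_one_eq_factorial, Nat.cast_prod]
  refine prod_congr rfl fun i hi => ?_
  obtain ⟨j, rfl⟩ := Nat.exists_eq_add_of_lt (mem_range.1 hi)
  rw [abs_sub_comm, show i + j + 1 - 1 - i = j by omega, Nat.cast_add a, Nat.cast_add a,
    add_sub_add_left_eq_sub, abs_of_nonneg] <;> push_cast <;> linarith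

lemma prod_Ioc_abs_sub (a k : ℕ) : ∏ x ∈ Ioc a (a + k), |(x : ℚ) - a| = k ! := by
  rw [← Ico_add_one_add_one_eq_Ioc, prod_Ico_eq_prod_range, ← prod_range_add_one_eq_factorial,
    Nat.cast_prod]
  refine prod_congr (by congr 1; omega) fun i _ => ?_
  rw [abs_of_nonneg] <;> push_cast <;> linarith

lemma prod_Icc_erase_abs_sub (a : ℕ) {n p : ℕ} (hp : p ≤ n) :
    ∏ x ∈ (Icc a (a + n)).erase (a + p), |(x : ℚ) - (a + p : ℕ)| = p ! * (n - p)! := by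
  have hsplit : (Icc a (a + n)).erase (a + p) =
      Ico a (a + p) ∪ Ioc (a + p) (a + p + (n - p)) := by
    ext x; simp only [mem_erase, mem_union, mem_Icc, mem_Ico, mem_Ioc]; omega
  have hdisj : Disjoint (Ico a (a + p)) (Ioc (a + p) (a + p + (n - p))) :=
    disjoint_left.2 fun x hx hx' => by simp only [mem_Ico, mem_Ioc] at hx hx'; omega
  rw [hsplit, prod_union hdisj, prod_Ico_abs_sub, prod_Ioc_abs_sub]

lemma frobeniusProduct_Ico (a n : ℕ) :
    frobeniusProduct (Ico a (a + n)) = ∏ k ∈ range n, (k ! : ℚ) / (a + k)! := by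
  induction n with
  | zero => simp [frobeniusProduct]
  | succ n ih =>
    rw [← add_assoc, ← insert_Ico_right_eq_Ico_add_one (Nat.le_add_right a n),
      frobeniusProduct_insert right_notMem_Ico, prod_Ico_abs_sub, ih, prod_range_succ]

lemma frobeniusProduct_Icc (a n : ℕ) :
    frobeniusProduct (Icc a (a + n)) = ∏ k ∈ range (n + 1), (k ! : ℚ) / (a + k)! := by
  rw [← frobeniusProduct_Ico, ← add_assoc, Ico_add_one_right_eq_Icc]

lemma frobeniusProduct_Icc_erase_erase (a : ℕ) {n p q : ℕ} (hpq : p < q) (hq : q ≤ n) :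
    frobeniusProduct (((Icc a (a + n)).erase (a + p)).erase (a + q)) =
      (∏ k ∈ range (n + 1), (k ! : ℚ) / (a + k)!) *
        (((q : ℚ) - p) * (a + p)! * (a + q)! / (p ! * (n - p)! * (q ! * (n - q)!))) := by
  have hpq' : (0 : ℚ) < q - p := by simpa using hpq
  have hp_mem : a + p ∈ (Icc a (a + n)).erase (a + q) := by
    simp only [mem_erase, mem_Icc]; omega
  have hq_mem : a + q ∈ (Icc a (a + n)).erase (a + p) := by
    simp only [mem_erase, mem_Icc]; omega
  have gap_q : ((q : ℚ) - p) *
      ∏ x ∈ ((Icc a (a + n)).erase (a + p)).erase (a + q), |(x : ℚ) - (a + q : ℕ)| =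
        q ! * (n - q)! := by
    rw [← prod_Icc_erase_abs_sub a hq, ← mul_prod_erase _ _ hp_mem, erase_right_comm, abs_sub_comm,
      Nat.cast_add a, Nat.cast_add a, add_sub_add_left_eq_sub, abs_of_pos hpq']
  rw [frobeniusProduct_erase hq_mem, frobeniusProduct_erase (mem_of_mem_erase hp_mem),
    prod_Icc_erase_abs_sub a (hpq.le.trans hq), frobeniusProduct_Icc, ← gap_q]
  have := hpq'.ne'
  field_simp

lemma rfact_sub (c m : ℕ) : rfact ((c : ℤ) - m) = (c.descFactorial m : ℚ) / c ! := by
  rcases le_or_gt m c with h | h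
  · rw [rfact, if_pos (by omega), show ((c : ℤ) - m).toNat = c - m by omega,
      ← Nat.factorial_mul_descFactorial h]
    have : (c.descFactorial m : ℚ) ≠ 0 := by
      simpa using h
    push_cast
    field_simp
  · rw [rfact, if_neg (by omega), Nat.descFactorial_of_lt h, Nat.cast_zero, zero_div]

lemma det_rfact_sub {n : ℕ} (c : Fin n → ℕ) :
    det (of fun k m : Fin n => rfact ((c k : ℤ) - (m : ℕ))) =
      (∏ k, ((c k)! : ℚ)⁻¹) * det (vandermonde fun k => (c k : ℚ)) := by
  rw [det_eval_matrixOfPolynomials_eq_det_vandermonde _ (fun m : Fin n => descPochhammer ℚ m)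
    (fun m => descPochhammer_natDegree ℚ m) fun m => monic_descPochhammer ℚ m,
    ← det_mul_column]
  congr 1
  ext k m
  simp only [of_apply, rfact_sub, descPochhammer_eval_eq_descFactorial, div_eq_inv_mul]

lemma det_rfact_sub_of_strictMono {n : ℕ} {A : Finset ℕ} {c : Fin n → ℕ} (hA : #A = n)
    (hcA : ∀ k, c k ∈ A) (hc : StrictMono c) :
    det (of fun k m : Fin n => rfact ((c k : ℤ) - (m : ℕ))) = frobeniusProduct A := by
  have reindex (g : ℕ → ℚ) : ∏ x ∈ A, g x = ∏ k, g (c k) := by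
    rw [orderEmbOfFin_unique hA hcA hc]
    conv_lhs => rw [← map_orderEmbOfFin_univ A hA, prod_map]
    rfl
  have later (k : Fin n) :
      ∏ y ∈ A with c k < y, ((y : ℚ) - c k) = ∏ l ∈ Ioi k, ((c l : ℚ) - c k) := by
    simp only [prod_filter, reindex, hc.lt_iff_lt, ← filter_lt_eq_Ioi]
  rw [det_rfact_sub, det_vandermonde, ← prod_mul_distrib, frobeniusProduct, reindex]
  simp only [later, div_eq_inv_mul]

lemma det_of_shift_rev {R : Type*} [CommRing R] {n : ℕ} (f : ℤ → R) (d : Fin n → ℤ) :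
    det (of fun j l : Fin n => f (d j + (l : ℕ) - (j : ℕ))) =
      det (of fun k m : Fin n => f (d k.rev + (k : ℕ) - (m : ℕ))) := by
  rw [← det_submatrix_equiv_self Fin.revPerm]
  congr 1
  ext k m
  simp only [submatrix_apply, of_apply, Fin.revPerm_apply, Fin.val_rev]
  congr 1
  omega

lemma prod_range_succ_factorial_div_add_factorial (a n : ℕ) :
    ∏ k ∈ range (n + 1), (k ! : ℚ) / (a + k)! =
      (n ! / a !) * ∏ k ∈ range n, (k ! : ℚ) / (a + 1 + k)! := by
  rw [prod_div_distrib, prod_div_distrib, prod_range_succ, prod_range_succ']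
  simp only [add_zero, add_assoc, add_comm 1]
  ring

/-- For `s = t + 1`, the set of beta-numbers of the partition with parts `s - 1 + i_j`, that is
`{s - 1, …, 3s + 1}` without `s + 1` and `3s - 1`. -/
def betaSet (t : ℕ) : Finset ℕ :=
  ((Icc t (t + (2 * t + 4))).erase (t + 2)).erase (t + (2 * t + 2))

/-- The elements of `betaSet t` in increasing order, indexed by `k ≤ 2 * t + 2`. -/
def betaNumber (t k : ℕ) : ℕ :=
  if k < 2 then t + k else if k < 2 * t + 1 then t + 1 + k else t + 2 + k

lemma card_betaSet {t : ℕ} (ht : 1 ≤ t) : #(betaSet t) = 2 * (t + 1) + 1 := by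
  have hp : t + 2 ∈ Icc t (t + (2 * t + 4)) := by simp
  have hq : t + (2 * t + 2) ∈ (Icc t (t + (2 * t + 4))).erase (t + 2) := by
    simp only [mem_erase, mem_Icc]; omega
  rw [betaSet, card_erase_of_mem hq, card_erase_of_mem hp, Nat.card_Icc]
  omega

lemma betaNumber_mem_betaSet {t k : ℕ} (hk : k ≤ 2 * t + 2) : betaNumber t k ∈ betaSet t := by
  simp only [betaNumber, betaSet, mem_erase, mem_Icc]
  split_ifs <;> omega

lemma betaNumber_strictMono (t : ℕ) : StrictMono (betaNumber t) :=
  strictMono_nat_of_lt_succ fun k => by unfold betaNumber; split_ifs <;> omega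

lemma natCast_betaNumber {t : ℕ} (ht : 1 ≤ t) (k : Fin (2 * (t + 1) + 1)) :
    (betaNumber t k : ℤ) = ((t + 1 : ℕ) : ℤ) - 1 + (if (k.rev : ℕ) < 2 then 2 else
      if (k.rev : ℕ) < 2 * (t + 1) - 1 then 1 else 0) + (k : ℕ) := by
  simp only [Fin.val_rev, betaNumber]
  split_ifs <;> omega

lemma frobeniusProduct_betaSet {t : ℕ} (ht : 1 ≤ t) :
    frobeniusProduct (betaSet t) =
      t * (t + 2) ^ 2 * (2 * t + 3) ^ 2 / (3 * (3 * t + 4)) *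
        ∏ k ∈ range (2 * t + 3), (k ! : ℚ) / (t + 1 + k)! := by
  have num₁ : ((2 * t + 4)! : ℚ) = (2 * t + 4) * (2 * t + 3) * (2 * t + 2)! := by
    rw [Nat.factorial_succ (2 * t + 3), Nat.factorial_succ (2 * t + 2)]; push_cast; ring
  have num₂ : ((2 * t + 3)! : ℚ) = (2 * t + 3) * (2 * t + 2)! := by
    rw [Nat.factorial_succ (2 * t + 2)]; push_cast; ring
  have num₃ : ((t + 2)! : ℚ) = (t + 2) * (t + 1) * t ! := by
    rw [Nat.factorial_succ (t + 1), Nat.factorial_succ t]; push_cast; ring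
  have den : ((t + 1 + (2 * t + 3))! : ℚ) = (3 * t + 4) * (3 * t + 3) * (t + (2 * t + 2))! := by
    rw [show t + 1 + (2 * t + 3) = t + (2 * t + 2) + 1 + 1 by ring, Nat.factorial_succ,
      Nat.factorial_succ]
    push_cast; ring
  rw [betaSet, frobeniusProduct_Icc_erase_erase t (by omega) (by omega),
    prod_range_succ_factorial_div_add_factorial, prod_range_succ _ (2 * t + 3),
    show 2 * t + 4 - 2 = 2 * t + 2 by omega, show 2 * t + 4 - (2 * t + 2) = 2 by omega,
    num₁, num₂, num₃, den, Nat.factorial_two]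
  have : (3 * t + 4 : ℚ) ≠ 0 := by positivity
  have : (3 * t + 3 : ℚ) ≠ 0 := by positivity
  push_cast
  field_simp
  ring

/-- For `i₁ = i₂ = 2`, `i_j = 1` for `3 ≤ j ≤ 2s−1` and `i_{2s} = i_{2s+1} = 0`, the
determinant of the `(2s+1)×(2s+1)` matrix with `(j,ℓ)`-entry `r(s − 1 + i_j − j + ℓ)`
equals `((s−1)(s+1)²(2s+1)²/(3(3s+1)))·∏_{k=0}^{2s} k!/(s+k)!`. -/
theorem harris_tu_determinant_sq_sq (s : ℕ) (hs : 2 ≤ s) :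
    Matrix.det (Matrix.of fun j ℓ : Fin (2*s + 1) =>
        rfact ((s : ℤ) - 1 +
          (if (j : ℕ) < 2 then 2 else if (j : ℕ) < 2*s - 1 then 1 else 0) +
          (ℓ : ℕ) - (j : ℕ))) =
      ((s : ℚ) - 1) * ((s : ℚ) + 1)^2 * (2*(s : ℚ) + 1)^2 / (3 * (3*(s : ℚ) + 1)) *
        ∏ k ∈ Finset.range (2*s + 1),
          (Nat.factorial k : ℚ) / (Nat.factorial (s + k) : ℚ) := by
  obtain ⟨t, rfl⟩ : ∃ t, s = t + 1 := ⟨s - 1, by omega⟩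
  have ht : 1 ≤ t := by omega
  rw [det_of_shift_rev rfact fun j : Fin (2 * (t + 1) + 1) => ((t + 1 : ℕ) : ℤ) - 1 +
    (if (j : ℕ) < 2 then 2 else if (j : ℕ) < 2 * (t + 1) - 1 then 1 else 0)]
  simp only [← natCast_betaNumber ht]
  rw [det_rfact_sub_of_strictMono (card_betaSet ht)
      (fun k => betaNumber_mem_betaSet (Nat.le_of_lt_succ k.isLt))
      ((betaNumber_strictMono t).comp Fin.val_strictMono),
    frobeniusProduct_betaSet ht, show 2 * (t + 1) + 1 = 2 * t + 3 by ring]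
  push_cast
  ring
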